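/- Let 0 < q < 1 be real, let x be a real number, and let d be an odd positive integer. For every integer n ≥ 0, the Carlitz type q-Changhee polynomial value satisfies Ch_{n,q}(x) = ((1+q)/(1+q^d)) · Σ_{k=0}^{n} [d]_q^k · ( Σ_{a=0}^{d−1} (−q)^a ℰ_{k,q^d}((a+x)/d) ) · S₁(n,k), where ℰ_{k,q^d} denotes the Carlitz q-Euler polynomial value formed with base q^d in place of q. -/

import Mathlib

/-- The `q`-analogue `[x]_q = (1 - q^x)/(1 - q)` (real exponent, via `rpow`). -/
noncomputable def qnum (q x : ℝ) : ℝ := (1 - q ^ x) / (1 - q)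

/-- Carlitz `q`-Euler polynomial value
`ℰ_{n,q}(x) = (1+q) ∑_{m=0}^∞ (-q)^m [m+x]_q^n`. -/
noncomputable def qEuler (q : ℝ) (n : ℕ) (x : ℝ) : ℝ :=
  (1 + q) * ∑' m : ℕ, (-q) ^ m * (qnum q ((m : ℝ) + x)) ^ n

/-- Signed Stirling numbers of the first kind, defined as the coefficients of the
falling factorial: `x(x-1)⋯(x-n+1) = ∑_{k=0}^n S₁(n,k) x^k`. -/
noncomputable def S1 (n k : ℕ) : ℤ := (descPochhammer ℤ n).coeff k

/-- Stirling numbers of the second kind, so that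
`x^n = ∑_{k=0}^n S₂(n,k) x(x-1)⋯(x-k+1)`. -/
def S2 : ℕ → ℕ → ℕ
  | 0, 0 => 1
  | 0, _ + 1 => 0
  | _ + 1, 0 => 0
  | n + 1, k + 1 => S2 n k + (k + 1) * S2 n (k + 1)

/-- Carlitz type `q`-Changhee polynomial value
`Ch_{n,q}(x) = ∑_{k=0}^n S₁(n,k) ℰ_{k,q}(x)`. -/
noncomputable def qChanghee (q : ℝ) (n : ℕ) (x : ℝ) : ℝ :=
  ∑ k ∈ Finset.range (n + 1), (S1 n k : ℝ) * qEuler q k x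

/-!
Grouping a power series in `r` by residues modulo `d` replaces `m` by `a + d m`, and since
`[a + d m + x]_q = [d]_q [m + (a + x)/d]_{q^d}`, each residue class is a series of the same kind
with `(r, q)` replaced by `(r^d, q^d)`. For `r = -q` and `d` odd, `r^d = -q^d`, so these are again
`q`-Euler series, now with base `q^d`. The relation for `Ch_{n,q}` follows term by term.
-/

lemma qnum_mul {q : ℝ} (hq : 0 ≤ q) (s t : ℝ) :
    qnum q (s * t) = qnum q s * qnum (q ^ s) t := by
  unfold qnum
  rw [Real.rpow_mul hq]
  obtain hs | hs := eq_or_ne (q ^ s) 1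
  · -- Here `qnum q s = 0`, whatever value division by zero gives `qnum (q ^ s) t`.
    simp [hs]
  · rw [mul_comm, div_mul_div_cancel₀ (sub_ne_zero.mpr hs.symm)]

lemma abs_qnum_le_of_le {q x y : ℝ} (hq0 : 0 < q) (hq1 : q ≤ 1) (hxy : x ≤ y) :
    |qnum q y| ≤ (1 + q ^ x) / (1 - q) := by
  have hanti : q ^ y ≤ q ^ x := Real.rpow_le_rpow_of_exponent_ge hq0 hq1 hxy
  have hnum : |1 - q ^ y| ≤ 1 + q ^ x :=
    calc |1 - q ^ y| ≤ |1| + |q ^ y| := abs_sub _ _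
      _ = 1 + q ^ y := by rw [abs_one, abs_of_pos (Real.rpow_pos_of_pos hq0 y)]
      _ ≤ 1 + q ^ x := by gcongr
  have hden : 0 ≤ 1 - q := sub_nonneg.mpr hq1
  rw [qnum, abs_div, abs_of_nonneg hden]
  gcongr

lemma summable_pow_mul_qnum_pow {q r : ℝ} (hq0 : 0 < q) (hq1 : q ≤ 1) (hr : |r| < 1)
    (k : ℕ) (x : ℝ) : Summable fun m : ℕ ↦ r ^ m * qnum q (m + x) ^ k := by
  have hgeom : Summable fun m : ℕ ↦ |r| ^ m * ((1 + q ^ x) / (1 - q)) ^ k :=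
    (summable_geometric_of_lt_one (abs_nonneg r) hr).mul_right _
  refine hgeom.of_norm_bounded fun m ↦ ?_
  rw [Real.norm_eq_abs, abs_mul, abs_pow, abs_pow]
  gcongr
  exact abs_qnum_le_of_le hq0 hq1 (le_add_of_nonneg_left m.cast_nonneg)

lemma tsum_eq_sum_range_tsum_add_mul {R : Type*} [AddCommGroup R] [UniformSpace R]
    [IsUniformAddGroup R] [CompleteSpace R] [T0Space R] {f : ℕ → R} (hf : Summable f)
    {d : ℕ} (hd : d ≠ 0) :
    ∑' m, f m = ∑ a ∈ Finset.range d, ∑' m, f (a + d * m) := by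
  obtain ⟨e, rfl⟩ := Nat.exists_eq_succ_of_ne_zero hd
  rw [Finset.sum_range]
  -- `ZMod (e + 1)` unfolds to `Fin (e + 1)`.
  exact Nat.sumByResidueClasses hf (e + 1)

lemma qnum_natCast_add_mul_add {q : ℝ} (hq : 0 ≤ q) {d : ℕ} (hd : d ≠ 0) (a m : ℕ) (x : ℝ) :
    qnum q ((a + d * m : ℕ) + x) = qnum q d * qnum (q ^ d) (m + (a + x) / d) := by
  have hsplit : ((a + d * m : ℕ) : ℝ) + x = d * (m + (a + x) / d) := by
    push_cast
    field_simp
    ring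
  rw [hsplit, qnum_mul hq, Real.rpow_natCast]

lemma tsum_pow_mul_qnum_pow_distribution {q r : ℝ} (hq0 : 0 < q) (hq1 : q ≤ 1) (hr : |r| < 1)
    {d : ℕ} (hd : d ≠ 0) (k : ℕ) (x : ℝ) :
    ∑' m : ℕ, r ^ m * qnum q (m + x) ^ k =
      qnum q d ^ k * ∑ a ∈ Finset.range d,
        r ^ a * ∑' m : ℕ, (r ^ d) ^ m * qnum (q ^ d) (m + (a + x) / d) ^ k := by
  rw [tsum_eq_sum_range_tsum_add_mul (summable_pow_mul_qnum_pow hq0 hq1 hr k x) hd,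
    Finset.mul_sum]
  refine Finset.sum_congr rfl fun a _ ↦ ?_
  rw [← tsum_mul_left, ← tsum_mul_left]
  refine tsum_congr fun m ↦ ?_
  rw [qnum_natCast_add_mul_add hq0.le hd]
  ring

lemma qEuler_distribution {q : ℝ} (hq0 : 0 < q) (hq1 : q < 1) {d : ℕ} (hd : Odd d)
    (k : ℕ) (x : ℝ) :
    qEuler q k x = (1 + q) / (1 + q ^ d) *
      (qnum q d ^ k * ∑ a ∈ Finset.range d, (-q) ^ a * qEuler (q ^ d) k ((a + x) / d)) := by
  have hr : |-q| < 1 := by rwa [abs_neg, abs_of_pos hq0]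
  have hden : 1 + q ^ d ≠ 0 := by positivity
  unfold qEuler
  rw [tsum_pow_mul_qnum_pow_distribution hq0 hq1.le hr hd.pos.ne', hd.neg_pow]
  simp only [mul_left_comm _ (1 + q ^ d), ← Finset.mul_sum]
  field_simp

theorem qChanghee_distribution_relation (q x : ℝ) (hq0 : 0 < q) (hq1 : q < 1)
    (d : ℕ) (hd0 : 0 < d) (hd : Odd d) (n : ℕ) :
    qChanghee q n x = ((1 + q) / (1 + q ^ d)) *
      ∑ k ∈ Finset.range (n + 1), (qnum q (d : ℝ)) ^ k *
        (∑ a ∈ Finset.range d, (-q) ^ a * qEuler (q ^ d) k (((a : ℝ) + x) / (d : ℝ))) *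
          (S1 n k : ℝ) := by
  unfold qChanghee
  rw [Finset.mul_sum]
  refine Finset.sum_congr rfl fun k _ ↦ ?_
  rw [qEuler_distribution hq0 hq1 hd]
  ring
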